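/- Let {G, (Γ0, Γ1), (Γ̃0, Γ̃1)} be a generalized boundary triple for the adjoint pair {S, S̃} with core {T, T̃} of {S*, S̃*}, and assume in addition that T = S* and T̃ = S̃* (i.e., the core coincides with the pair of adjoints). Then the joint boundary maps are surjective onto G × G: {(Γ0 f, Γ1 f) : f ∈ dom S*} = G × G and {(Γ̃0 g, Γ̃1 g) : g ∈ dom S̃*} = G × G. -/

import Mathlib

/-!
Write `A0` and `At0` for the restrictions of `T` to `ker Γ0` and of `Tt` to `ker Γt0`.
Since `Γ0` is surjective, it suffices that `Γ1` maps `ker Γ0` onto `G`.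

* `Γ1 (ker Γ0)` has trivial orthogonal complement (`eq_zero_of_orthogonal`): if `ψ = Γt0 g` is
  orthogonal to it, the Green identity puts `g` into `dom A0* = dom At0`, so
  `ψ = Γt0 g = 0`.
* Hence `Γt0` has closed graph for the graph norm of `Tt`, because by the Green identity every
  `⟪Γt0 g, Γ1 f⟫` with `f ∈ ker Γ0` depends continuously on `(g, Tt g)`. The graph of `Tt = St*` is
  complete, so `Γt0` is bounded on it (`exists_continuous_trace`).
* For `φ : G`, the bounded functional `g ↦ ⟪φ, Γt0 g⟫` on the graph is therefore of the form
  `⟪u, g⟫ + ⟪v, Tt g⟫`. Testing with `g ∈ ker Γt0` shows `-v ∈ dom At0* = dom A0` and `A0 (-v) = u`,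
  and then the Green identity and surjectivity of `Γt0` give `Γ1 (-v) = φ`.

The second half of the theorem is the first half for the triple with the two sides exchanged.
-/

open scoped ComplexInnerProductSpace

noncomputable section

/-- The inner product in the convention of the paper: linear in the *first* argument and
conjugate-linear in the second (the opposite of Mathlib's convention). -/
def pinner {E : Type*} [NormedAddCommGroup E] [InnerProductSpace ℂ E] (x y : E) : ℂ :=
  ⟪y, x⟫

variable {H G : Type*}
  [NormedAddCommGroup H] [InnerProductSpace ℂ H] [CompleteSpace H]
  [NormedAddCommGroup G] [InnerProductSpace ℂ G] [CompleteSpace G]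

/-- The restriction of a partially defined linear operator `T` in `H` to a submodule `p` of its
domain, viewed again as a partially defined linear operator in `H`. -/
def LinearPMap.restrictTo (T : H →ₗ.[ℂ] H) (p : Submodule ℂ T.domain) : H →ₗ.[ℂ] H where
  domain := p.map T.domain.subtype
  toFun := T.toFun ∘ₗ p.subtype ∘ₗ
    (Submodule.equivMapOfInjective T.domain.subtype (Submodule.injective_subtype _)
      p).symm.toLinearMap

/-- `R` is the (everywhere defined, bounded) resolvent of the operator `A` at the point `lam`,
i.e. `R` is a two-sided inverse of `A - lam`. -/
def ResolventAt (A : H →ₗ.[ℂ] H) (lam : ℂ) (R : H →L[ℂ] H) : Prop :=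
  (∀ x : A.domain, R (A x - lam • (x : H)) = (x : H)) ∧
  (∀ h : H, ∃ x : A.domain, (x : H) = R h ∧ A x - lam • (x : H) = h)

/-- `lam` belongs to the resolvent set of `A`: `A - lam` is a bijection of `dom A` onto `H`
with a bounded everywhere defined inverse. -/
def InResolventSet (A : H →ₗ.[ℂ] H) (lam : ℂ) : Prop :=
  ∃ R : H →L[ℂ] H, ResolventAt A lam R

/-- `{G, (Γ0, Γ1), (Γt0, Γt1)}` is a generalized boundary triple for the adjoint pair `{S, St}`
with core `{T, Tt}` of `{S*, St*}`. -/
structure IsGeneralizedBoundaryTriple (S St T Tt : H →ₗ.[ℂ] H)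
    (Γ0 Γ1 : T.domain →ₗ[ℂ] G) (Γt0 Γt1 : Tt.domain →ₗ[ℂ] G) : Prop where
  dense_S : Dense (S.domain : Set H)
  dense_St : Dense (St.domain : Set H)
  closed_S : S.IsClosed
  closed_St : St.IsClosed
  adjoint_pair : ∀ (f : S.domain) (g : St.domain),
    pinner (S f) (g : H) = pinner (f : H) (St g)
  T_le : T ≤ S.adjoint
  Tt_le : Tt ≤ St.adjoint
  T_adjoint : T.adjoint = S
  Tt_adjoint : Tt.adjoint = St
  green : ∀ (f : T.domain) (g : Tt.domain),
    pinner (T f) (g : H) - pinner (f : H) (Tt g)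
      = pinner (Γ1 f) (Γt0 g) - pinner (Γ0 f) (Γt1 g)
  surj_Γ0 : Function.Surjective Γ0
  surj_Γt0 : Function.Surjective Γt0
  A0_adjoint : (T.restrictTo (LinearMap.ker Γ0)).adjoint = Tt.restrictTo (LinearMap.ker Γt0)
  At0_adjoint : (Tt.restrictTo (LinearMap.ker Γt0)).adjoint = T.restrictTo (LinearMap.ker Γ0)

theorem exists_of_restrictTo (T : H →ₗ.[ℂ] H) (p : Submodule ℂ T.domain)
    (y : (T.restrictTo p).domain) :
    ∃ z : T.domain, z ∈ p ∧ (z : H) = y ∧ T.restrictTo p y = T z := by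
  let w := (Submodule.equivMapOfInjective T.domain.subtype (Submodule.injective_subtype _)
      p).symm y
  refine ⟨w, w.2, ?_, rfl⟩
  have h := (Submodule.equivMapOfInjective T.domain.subtype (Submodule.injective_subtype _)
      p).apply_symm_apply y
  have h2 := congrArg Subtype.val h
  simpa [Submodule.coe_equivMapOfInjective_apply] using h2

theorem mem_of_mem_restrictTo (T : H →ₗ.[ℂ] H) (p : Submodule ℂ T.domain) (z : T.domain)
    (hz : (z : H) ∈ (T.restrictTo p).domain) : z ∈ p := by
  obtain ⟨w, hw, h, -⟩ := exists_of_restrictTo T p ⟨z, hz⟩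
  rwa [← Subtype.ext h]

namespace IsGeneralizedBoundaryTriple

variable {S St T Tt : H →ₗ.[ℂ] H}
  {Γ0 Γ1 : T.domain →ₗ[ℂ] G} {Γt0 Γt1 : Tt.domain →ₗ[ℂ] G}

/-- The Green identity in Mathlib's convention for the inner product. -/
theorem green_inner (h : IsGeneralizedBoundaryTriple S St T Tt Γ0 Γ1 Γt0 Γt1)
    (f : T.domain) (g : Tt.domain) :
    ⟪(g : H), T f⟫ - ⟪Tt g, (f : H)⟫ = ⟪Γt0 g, Γ1 f⟫ - ⟪Γt1 g, Γ0 f⟫ :=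
  h.green f g

/-- The definition is invariant under exchanging the two sides of the adjoint pair. -/
theorem swap (h : IsGeneralizedBoundaryTriple S St T Tt Γ0 Γ1 Γt0 Γt1) :
    IsGeneralizedBoundaryTriple St S Tt T Γt0 Γt1 Γ0 Γ1 where
  dense_S := h.dense_St
  dense_St := h.dense_S
  closed_S := h.closed_St
  closed_St := h.closed_S
  adjoint_pair f g := by
    have := congrArg (starRingEnd ℂ) (h.adjoint_pair g f)
    simp only [pinner, inner_conj_symm] at this ⊢
    exact this.symm
  T_le := h.Tt_le
  Tt_le := h.T_le
  T_adjoint := h.Tt_adjoint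
  Tt_adjoint := h.T_adjoint
  green f g := by
    have := congrArg (starRingEnd ℂ) (h.green g f)
    simp only [pinner, map_sub, inner_conj_symm] at this ⊢
    linear_combination -this
  surj_Γ0 := h.surj_Γt0
  surj_Γt0 := h.surj_Γ0
  A0_adjoint := h.At0_adjoint
  At0_adjoint := h.A0_adjoint

/-- Since `A0 ⊆ T = S*`, every element of `dom S` lies in `dom A0* = dom At0`, where
`At0 = Tt.restrictTo (ker Γt0)`; so `dom At0` inherits density from `dom S`. -/
theorem dense_ker (h : IsGeneralizedBoundaryTriple S St T Tt Γ0 Γ1 Γt0 Γt1)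
    (hT : T = S.adjoint) :
    Dense ((Tt.restrictTo (LinearMap.ker Γt0)).domain : Set H) := by
  refine h.dense_S.mono fun x hx => ?_
  change x ∈ (Tt.restrictTo (LinearMap.ker Γt0)).domain
  rw [← h.A0_adjoint]
  refine LinearPMap.mem_adjoint_domain_of_exists _ ⟨S ⟨x, hx⟩, fun y => ?_⟩
  obtain ⟨z, -, hzy, hz⟩ := exists_of_restrictTo _ _ y
  rw [hz, ← hzy]
  subst hT
  exact (LinearPMap.adjoint_isFormalAdjoint h.dense_S).symm ⟨x, hx⟩ z

theorem eq_zero_of_orthogonal (h : IsGeneralizedBoundaryTriple S St T Tt Γ0 Γ1 Γt0 Γt1)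
    (ψ : G) (hψ : ∀ f : T.domain, Γ0 f = 0 → ⟪ψ, Γ1 f⟫ = 0) : ψ = 0 := by
  obtain ⟨g, rfl⟩ := h.surj_Γt0 ψ
  refine mem_of_mem_restrictTo Tt (LinearMap.ker Γt0) g ?_
  rw [← h.A0_adjoint]
  refine LinearPMap.mem_adjoint_domain_of_exists _ ⟨Tt g, fun y => ?_⟩
  obtain ⟨z, hz0, hzy, hz⟩ := exists_of_restrictTo _ _ y
  have hg := h.green_inner z g
  rw [hψ z hz0, LinearMap.mem_ker.mp hz0, inner_zero_right, sub_zero, sub_eq_zero] at hg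
  rw [hz, ← hzy, hg]

/-- `Γt0`, transported to the graph of `Tt`, is bounded. -/
theorem exists_continuous_trace (h : IsGeneralizedBoundaryTriple S St T Tt Γ0 Γ1 Γt0 Γt1)
    (hTt : Tt = St.adjoint) :
    ∃ L : Tt.graph →L[ℂ] G, ∀ g : Tt.domain, L ⟨(g, Tt g), Tt.mem_graph g⟩ = Γt0 g := by
  have hclosed : IsClosed (Tt.graph : Set (H × H)) := by
    have := LinearPMap.adjoint_isClosed h.dense_St
    rwa [← hTt] at this
  have : CompleteSpace Tt.graph := hclosed.completeSpace_coe
  let P : Tt.graph →ₗ[ℂ] Tt.domain :=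
    ((LinearMap.fst ℂ H H).comp Tt.graph.subtype).codRestrict Tt.domain
      fun x => LinearPMap.mem_domain_of_mem_graph x.2
  have hP : ∀ x : Tt.graph, Tt (P x) = x.1.2 := fun x =>
    (LinearPMap.image_iff (P x).2).mpr x.2 |>.symm
  have hcont : Continuous (Γt0.comp P) := by
    refine (Γt0.comp P).continuous_of_seq_closed_graph fun u x y hu hy => ?_
    rw [← sub_eq_zero]
    refine h.eq_zero_of_orthogonal _ fun f hf => ?_
    have key : ∀ z : Tt.graph,
        ⟪(Γt0.comp P) z, Γ1 f⟫ = ⟪z.1.1, T f⟫ - ⟪z.1.2, (f : H)⟫ := by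
      intro z
      have hg := h.green_inner f (P z)
      rw [hf, inner_zero_right, sub_zero, hP] at hg
      exact hg.symm
    have h1 : Filter.Tendsto (fun n => ⟪(Γt0.comp P) (u n), Γ1 f⟫) Filter.atTop
        (nhds ⟪y, Γ1 f⟫) := hy.inner tendsto_const_nhds
    have h2 : Filter.Tendsto (fun n => ⟪(Γt0.comp P) (u n), Γ1 f⟫) Filter.atTop
        (nhds ⟪(Γt0.comp P) x, Γ1 f⟫) := by
      simp only [key]
      have hc : Continuous fun z : Tt.graph => ⟪z.1.1, T f⟫ - ⟪z.1.2, (f : H)⟫ := by fun_prop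
      exact (hc.tendsto x).comp hu
    rw [inner_sub_left, tendsto_nhds_unique h1 h2, sub_self]
  exact ⟨⟨Γt0.comp P, hcont⟩, fun g => rfl⟩

theorem exists_ker_preimage (h : IsGeneralizedBoundaryTriple S St T Tt Γ0 Γ1 Γt0 Γt1)
    (hT : T = S.adjoint) (hTt : Tt = St.adjoint) (φ : G) :
    ∃ f : T.domain, Γ0 f = 0 ∧ Γ1 f = φ := by
  obtain ⟨L, hL⟩ := h.exists_continuous_trace hTt
  -- Extending to all of `H × H` splits the functional into two components with Riesz vectors.
  obtain ⟨l, hl, -⟩ := exists_extension_norm_eq Tt.graph ((innerSL ℂ φ).comp L)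
  let u : H := (InnerProductSpace.toDual ℂ H).symm (l.comp (ContinuousLinearMap.inl ℂ H H))
  let v : H := (InnerProductSpace.toDual ℂ H).symm (l.comp (ContinuousLinearMap.inr ℂ H H))
  have huv : ∀ g : Tt.domain, ⟪u, (g : H)⟫ + ⟪v, Tt g⟫ = ⟪φ, Γt0 g⟫ := by
    intro g
    have h1 := hl ⟨(g, Tt g), Tt.mem_graph g⟩
    simp only [ContinuousLinearMap.comp_apply, hL, innerSL_apply_apply] at h1
    rw [← h1]
    simp only [u, v, InnerProductSpace.toDual_symm_apply, ContinuousLinearMap.comp_apply,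
      ContinuousLinearMap.inl_apply, ContinuousLinearMap.inr_apply, ← map_add]
    simp
  have hadj : ∀ y : (Tt.restrictTo (LinearMap.ker Γt0)).domain,
      ⟪u, (y : H)⟫ = ⟪-v, Tt.restrictTo (LinearMap.ker Γt0) y⟫ := by
    intro y
    obtain ⟨z, hz0, hzy, hz⟩ := exists_of_restrictTo _ _ y
    have h1 := huv z
    rw [LinearMap.mem_ker.mp hz0, inner_zero_right] at h1
    rw [hz, ← hzy, inner_neg_left]
    linear_combination h1
  have hmem : -v ∈ (Tt.restrictTo (LinearMap.ker Γt0)).adjoint.domain :=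
    LinearPMap.mem_adjoint_domain_of_exists _ ⟨u, hadj⟩
  have hval := LinearPMap.adjoint_apply_eq (h.dense_ker hT) ⟨-v, hmem⟩ hadj
  have hex : ∃ f : T.domain, Γ0 f = 0 ∧ (f : H) = -v ∧ T f = u := by
    have hgr : (-v, u) ∈ (Tt.restrictTo (LinearMap.ker Γt0)).adjoint.graph := by
      rw [← hval]
      exact LinearPMap.mem_graph _ ⟨-v, hmem⟩
    rw [h.At0_adjoint, LinearPMap.mem_graph_iff] at hgr
    obtain ⟨y, hy1, hy2⟩ := hgr
    obtain ⟨z, hz0, hzy, hz⟩ := exists_of_restrictTo _ _ y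
    exact ⟨z, hz0, hzy.trans hy1, hz.symm.trans hy2⟩
  obtain ⟨f, hf0, hfv, hfu⟩ := hex
  refine ⟨f, hf0, ext_inner_left ℂ fun ψ => ?_⟩
  obtain ⟨g, rfl⟩ := h.surj_Γt0 ψ
  have hg := h.green_inner f g
  rw [hf0, inner_zero_right, sub_zero, hfv, hfu, inner_neg_right, sub_neg_eq_add] at hg
  rw [← hg, ← inner_conj_symm (Γt0 g) φ, ← huv g, map_add, inner_conj_symm, inner_conj_symm]

theorem range_eq_univ (h : IsGeneralizedBoundaryTriple S St T Tt Γ0 Γ1 Γt0 Γt1)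
    (hT : T = S.adjoint) (hTt : Tt = St.adjoint) :
    Set.range (fun f : T.domain => (Γ0 f, Γ1 f)) = (Set.univ : Set (G × G)) := by
  refine Set.eq_univ_of_forall fun ⟨a, b⟩ => ?_
  obtain ⟨f, hf⟩ := h.surj_Γ0 a
  obtain ⟨k, hk0, hk1⟩ := h.exists_ker_preimage hT hTt (b - Γ1 f)
  exact ⟨f + k, by simp [hf, hk0, hk1]⟩

end IsGeneralizedBoundaryTriple

theorem stmt4
    (S St T Tt : H →ₗ.[ℂ] H)
    (Γ0 Γ1 : T.domain →ₗ[ℂ] G) (Γt0 Γt1 : Tt.domain →ₗ[ℂ] G)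
    (hgbt : IsGeneralizedBoundaryTriple S St T Tt Γ0 Γ1 Γt0 Γt1)
    (hT : T = S.adjoint) (hTt : Tt = St.adjoint) :
    Set.range (fun f : T.domain => (Γ0 f, Γ1 f)) = (Set.univ : Set (G × G)) ∧
    Set.range (fun g : Tt.domain => (Γt0 g, Γt1 g)) = (Set.univ : Set (G × G)) := by
  exact ⟨hgbt.range_eq_univ hT hTt, hgbt.swap.range_eq_univ hTt hT⟩

end
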